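/- Fix θ, θ' ∈ ℂ. Let U ⊆ ℂ \ {0, 1} be open and let y : U → ℂ be twice complex differentiable with y(t) ∉ {0, 1, t} for all t ∈ U. Suppose y satisfies (y(t) − 1)² = 1 − t identically on U. Then y solves the sixth Painlevé equation PVI(α,β,γ,δ) on U with θ-tuple (θ₀, θ₁, θ_t, θ_∞) = (θ, θ', θ, θ'+1), i.e. with α = θ'²/2, β = −θ²/2, γ = θ'²/2, δ = (1 − θ²)/2. -/

import Mathlib

/-!
On the curve `(y - 1)² = 1 - t` one has `t - 1 = -(y - 1)²` and `y - t = y (y - 1)`. Hence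
`(t - 1) / (y - 1)² = -1` and `t (t - 1) / (y - t)² = -t / y²`, so for `γ = α` and `δ = 1/2 + β`
the free parameters cancel and the last factor of the Painlevé equation reduces to `-t / (2 y²)`.
The remaining identity is checked with `y' = -1 / (2 (y - 1))` and `y'' = -1 / (4 (y - 1)³)`;
these derivatives exist as soon as `y` is continuous, because `y - 1` is then a continuous
nonvanishing square root of `1 - t`.
-/

open Filter Topology

section Definitions

variable {𝕜 : Type*}

/-- The right-hand side of the sixth Painlevé equation with parameters `α β γ δ`, as a function of
the independent variable `t`, the value `y` and the first derivative `p`. -/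
def painleveSixRHS [Field 𝕜] (α β γ δ t y p : 𝕜) : 𝕜 :=
  (1 / 2) * (1 / y + 1 / (y - 1) + 1 / (y - t)) * p ^ 2
    - (1 / t + 1 / (t - 1) + 1 / (y - t)) * p
    + (y * (y - 1) * (y - t) / (t ^ 2 * (t - 1) ^ 2)) *
      (α + β * t / y ^ 2 + γ * (t - 1) / (y - 1) ^ 2 + δ * t * (t - 1) / (y - t) ^ 2)

/-- `y` solves the sixth Painlevé equation with parameters `α β γ δ` on `U`. The existence of both
derivatives and the avoidance of the singular values `0`, `1`, `t` are part of the notion, so that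
neither `deriv` nor division takes a junk value at a point of `U` other than `0` and `1`. -/
structure IsPainleveSixSolutionOn [NontriviallyNormedField 𝕜]
    (α β γ δ : 𝕜) (y : 𝕜 → 𝕜) (U : Set 𝕜) : Prop where
  differentiableAt : ∀ t ∈ U, DifferentiableAt 𝕜 y t
  differentiableAt_deriv : ∀ t ∈ U, DifferentiableAt 𝕜 (deriv y) t
  ne_zero : ∀ t ∈ U, y t ≠ 0
  ne_one : ∀ t ∈ U, y t ≠ 1
  ne_self : ∀ t ∈ U, y t ≠ t
  deriv_deriv_eq : ∀ t ∈ U, deriv (deriv y) t = painleveSixRHS α β γ δ t (y t) (deriv y t)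

end Definitions

section CurveRing

variable {R : Type*} [CommRing R] {t y : R}

theorem eq_mul_two_sub_of_sub_one_sq_eq (h : (y - 1) ^ 2 = 1 - t) : t = y * (2 - y) := by
  linear_combination h

theorem sub_one_eq_neg_sq_of_sub_one_sq_eq (h : (y - 1) ^ 2 = 1 - t) : t - 1 = -(y - 1) ^ 2 := by
  linear_combination h

theorem sub_eq_mul_sub_one_of_sub_one_sq_eq (h : (y - 1) ^ 2 = 1 - t) : y - t = y * (y - 1) := by
  linear_combination -h

theorem ne_zero_of_sub_one_sq_eq (h : (y - 1) ^ 2 = 1 - t) (ht : t ≠ 0) : y ≠ 0 :=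
  left_ne_zero_of_mul (eq_mul_two_sub_of_sub_one_sq_eq h ▸ ht)

theorem sub_one_ne_zero_of_sub_one_sq_eq (h : (y - 1) ^ 2 = 1 - t) (ht : t ≠ 1) : y - 1 ≠ 0 :=
  ne_zero_pow two_ne_zero (h ▸ sub_ne_zero.mpr ht.symm)

end CurveRing

section CurveField

variable {K : Type*} [Field K] {t y : K}

theorem painleveSix_parameter_factor_eq (α β c : K) (h : (y - 1) ^ 2 = 1 - t)
    (hy : y ≠ 0) (hy1 : y - 1 ≠ 0) :
    α + β * t / y ^ 2 + α * (t - 1) / (y - 1) ^ 2 + (c + β) * t * (t - 1) / (y - t) ^ 2 =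
      -c * t / y ^ 2 := by
  rw [sub_eq_mul_sub_one_of_sub_one_sq_eq h, sub_one_eq_neg_sq_of_sub_one_sq_eq h]
  field_simp
  ring

theorem painleveSixRHS_eq_of_sub_one_sq_eq [NeZero (2 : K)] (α β : K) (h : (y - 1) ^ 2 = 1 - t)
    (ht0 : t ≠ 0) (ht1 : t ≠ 1) :
    painleveSixRHS α β α (1 / 2 + β) t y (-1 / (2 * (y - 1))) = -1 / (4 * (y - 1) ^ 3) := by
  have hy := ne_zero_of_sub_one_sq_eq h ht0
  have hy1 := sub_one_ne_zero_of_sub_one_sq_eq h ht1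
  have h2 : (2 : K) ≠ 0 := NeZero.ne 2
  have h4 : (4 : K) = 2 * 2 := by norm_num
  rw [painleveSixRHS, painleveSix_parameter_factor_eq α β (1 / 2) h hy hy1,
    sub_eq_mul_sub_one_of_sub_one_sq_eq h, sub_one_eq_neg_sq_of_sub_one_sq_eq h, h4]
  obtain rfl := eq_mul_two_sub_of_sub_one_sq_eq h
  have hy2 : 2 - y ≠ 0 := right_ne_zero_of_mul ht0
  field_simp
  ring

end CurveField

section Derivatives

variable {𝕜 : Type*} [NontriviallyNormedField 𝕜] [NeZero (2 : 𝕜)]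

theorem hasDerivAt_of_sq_eventuallyEq {f w : 𝕜 → 𝕜} {f' t : 𝕜} (hf : HasDerivAt f f' t)
    (hw : ContinuousAt w t) (hwf : ∀ᶠ s in 𝓝 t, w s ^ 2 = f s) (hwt : w t ≠ 0) :
    HasDerivAt w (f' / (2 * w t)) t := by
  have hsum : Tendsto (fun s ↦ w s + w t) (𝓝 t) (𝓝 (2 * w t)) := by
    simpa only [two_mul] using hw.tendsto.add_const (w t)
  have hsum_ne : 2 * w t ≠ 0 := mul_ne_zero (NeZero.ne 2) hwt
  rw [hasDerivAt_iff_tendsto_slope] at hf ⊢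
  refine (hf.div (hsum.mono_left nhdsWithin_le_nhds) hsum_ne).congr' ?_
  filter_upwards [nhdsWithin_le_nhds hwf, nhdsWithin_le_nhds (hsum.eventually_ne hsum_ne)]
    with s hs hs_ne
  rw [Pi.div_apply, div_eq_iff hs_ne, slope_def_field, slope_def_field, ← hs, ← hwf.self_of_nhds]
  ring

variable {U : Set 𝕜} {y : 𝕜 → 𝕜} {t : 𝕜}

theorem hasDerivAt_of_sub_one_sq_eq (hU : IsOpen U) (hy : ContinuousOn y U)
    (h : ∀ s ∈ U, (y s - 1) ^ 2 = 1 - s) (ht : t ∈ U) (ht1 : t ≠ 1) :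
    HasDerivAt y (-1 / (2 * (y t - 1))) t := by
  have hmem : U ∈ 𝓝 t := hU.mem_nhds ht
  have hsqrt : HasDerivAt (fun s ↦ y s - 1) (-1 / (2 * (y t - 1))) t :=
    hasDerivAt_of_sq_eventuallyEq ((hasDerivAt_id t).const_sub 1)
      ((hy.continuousAt hmem).sub continuousAt_const) (eventually_of_mem hmem h)
      (sub_one_ne_zero_of_sub_one_sq_eq (h t ht) ht1)
  simpa only [sub_add_cancel] using hsqrt.add_const 1

theorem hasDerivAt_deriv_of_sub_one_sq_eq (hU : IsOpen U) (hU1 : ∀ s ∈ U, s ≠ 1)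
    (hy : ContinuousOn y U) (h : ∀ s ∈ U, (y s - 1) ^ 2 = 1 - s) (ht : t ∈ U) :
    HasDerivAt (deriv y) (-1 / (4 * (y t - 1) ^ 3)) t := by
  have hy1 := sub_one_ne_zero_of_sub_one_sq_eq (h t ht) (hU1 t ht)
  have h2 : (2 : 𝕜) ≠ 0 := NeZero.ne 2
  have h4 : (4 : 𝕜) = 2 * 2 := by norm_num
  have hderiv : deriv y =ᶠ[𝓝 t] fun s ↦ -1 / (2 * (y s - 1)) := by
    filter_upwards [hU.mem_nhds ht] with s hs
    exact (hasDerivAt_of_sub_one_sq_eq hU hy h hs (hU1 s hs)).deriv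
  have hquot := (hasDerivAt_const t (-1 : 𝕜)).fun_div
    (((hasDerivAt_of_sub_one_sq_eq hU hy h ht (hU1 t ht)).sub_const 1).const_mul 2)
    (mul_ne_zero h2 hy1)
  refine (hquot.congr_of_eventuallyEq hderiv).congr_deriv ?_
  rw [h4]
  field_simp
  ring

theorem stmt_5_general (α β : 𝕜) (hU : IsOpen U) (hU01 : ∀ t ∈ U, t ≠ 0 ∧ t ≠ 1)
    (hy : ContinuousOn y U) (h : ∀ t ∈ U, (y t - 1) ^ 2 = 1 - t) :
    IsPainleveSixSolutionOn α β α (1 / 2 + β) y U := by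
  have hU1 : ∀ t ∈ U, t ≠ 1 := fun t ht ↦ (hU01 t ht).2
  have hy0 : ∀ t ∈ U, y t ≠ 0 := fun t ht ↦ ne_zero_of_sub_one_sq_eq (h t ht) (hU01 t ht).1
  have hy1 : ∀ t ∈ U, y t - 1 ≠ 0 :=
    fun t ht ↦ sub_one_ne_zero_of_sub_one_sq_eq (h t ht) (hU1 t ht)
  have hd : ∀ t ∈ U, HasDerivAt y (-1 / (2 * (y t - 1))) t :=
    fun t ht ↦ hasDerivAt_of_sub_one_sq_eq hU hy h ht (hU1 t ht)
  have hdd : ∀ t ∈ U, HasDerivAt (deriv y) (-1 / (4 * (y t - 1) ^ 3)) t :=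
    fun t ht ↦ hasDerivAt_deriv_of_sub_one_sq_eq hU hU1 hy h ht
  exact
    { differentiableAt := fun t ht ↦ (hd t ht).differentiableAt
      differentiableAt_deriv := fun t ht ↦ (hdd t ht).differentiableAt
      ne_zero := hy0
      ne_one := fun t ht ↦ sub_ne_zero.mp (hy1 t ht)
      ne_self := fun t ht ↦ sub_ne_zero.mp <|
        sub_eq_mul_sub_one_of_sub_one_sq_eq (h t ht) ▸ mul_ne_zero (hy0 t ht) (hy1 t ht)
      deriv_deriv_eq := fun t ht ↦ by
        rw [(hdd t ht).deriv, (hd t ht).deriv,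
          painleveSixRHS_eq_of_sub_one_sq_eq α β (h t ht) (hU01 t ht).1 (hU1 t ht)] }

end Derivatives

/-- A solution of the stated algebraic equation solves the sixth Painlevé equation
with the indicated θ-tuple. -/
theorem stmt_5 (θ θ' : ℂ) (U : Set ℂ) (hUopen : IsOpen U)
    (hU : ∀ t ∈ U, t ≠ 0 ∧ t ≠ 1)
    (y : ℂ → ℂ)
    (hdiff : ∀ t ∈ U, DifferentiableAt ℂ y t ∧ DifferentiableAt ℂ (deriv y) t)
    (hreg : ∀ t ∈ U, y t ≠ 0 ∧ y t ≠ 1 ∧ y t ≠ t)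
    (halg : ∀ t ∈ U, (y t - 1)^2 = 1 - t)
    :
    ∀ t ∈ U,
      deriv (deriv y) t =
        (1/2) * (1/(y t) + 1/(y t - 1) + 1/(y t - t)) * (deriv y t)^2
        - (1/t + 1/(t-1) + 1/(y t - t)) * (deriv y t)
        + (y t * (y t - 1) * (y t - t) / (t^2 * (t-1)^2)) *
          ((θ'^2/2) + (-(θ^2)/2) * t / (y t)^2
            + (θ'^2/2) * (t-1) / (y t - 1)^2
            + ((1-θ^2)/2) * t * (t-1) / (y t - t)^2) := by
  have hy : ContinuousOn y U := fun t ht ↦ (hdiff t ht).1.continuousAt.continuousWithinAt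
  rw [show (1 - θ ^ 2) / 2 = 1 / 2 + -(θ ^ 2) / 2 by ring]
  exact (stmt_5_general (θ' ^ 2 / 2) (-(θ ^ 2) / 2) hUopen hU hy halg).deriv_deriv_eq
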